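/- For natural p ≥ 1 and n ≥ (p+1)k, the set Gen_p(n,k) of starting words whose greedy list exhausts C_n(p,k) has cardinality n - k + 1 - p. -/

import Mathlib

/-- Result of transposing positions `i` (a `1`) and `j` (a `0`). -/
def applyT (w : List Bool) (i j : ℕ) : List Bool := (w.set i false).set j true

/-- `(i, j)` is a homogeneous transposition for `w`. -/
def okT (w : List Bool) (i j : ℕ) : Prop :=
  i < w.length ∧ j < w.length ∧ w.getD i false = true ∧ w.getD j false = false ∧
    ∀ t, min i j < t → t < max i j → w.getD t false = false

/-- `L` is the list produced by the greedy Gray code algorithm for the set of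
words satisfying `P`, started at `α`: each step performs the homogeneous
transposition with leftmost possible `1` and then leftmost possible `0`
producing a word satisfying `P` not yet listed, and the process runs until
no further step is possible. -/
def IsGreedyList (P : List Bool → Prop) (α : List Bool) (L : List (List Bool)) : Prop :=
  L.head? = some α ∧ L.Nodup ∧ (∀ w ∈ L, P w) ∧
  (∀ m, m + 1 < L.length →
    ∃ i j, okT (L.getD m []) i j ∧ L.getD (m + 1) [] = applyT (L.getD m []) i j ∧
      ∀ i' j', okT (L.getD m []) i' j' → P (applyT (L.getD m []) i' j') →
        applyT (L.getD m []) i' j' ∉ L.take (m + 1) →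
        i < i' ∨ (i = i' ∧ j ≤ j')) ∧
  (∀ i j, okT (L.getD (L.length - 1) []) i j →
    P (applyT (L.getD (L.length - 1) []) i j) →
    applyT (L.getD (L.length - 1) []) i j ∈ L)

/-- `α` is a generator: the greedy list started at `α` exhausts the words satisfying `P`. -/
def IsGen (P : List Bool → Prop) (α : List Bool) : Prop :=
  P α ∧ ∃ L, IsGreedyList P α L ∧ ∀ w, P w → w ∈ L

def memC (n p k : ℕ) (w : List Bool) : Prop :=
  w.length = n ∧ w.count true = k ∧ ∀ u v : List Bool, w = u ++ v → p * u.count true ≤ u.count false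

/-!
Encode a word by the positions of its ones in decreasing order, so that a homogeneous transposition
changes one entry without reordering the list, and the greedy rule prefers to move the lowest entry.
Hence, while the last one stays at `y`, the algorithm runs through that layer as it would on the
words of length `y` with one `1` less; only when this run halts does the last one move, to the
leftmost layer in which the same tail is still free.

If every run inside a layer is exhaustive, the layers are swept upwards or downwards one by one. By
induction on `k`, the run from a word of `generators p k x` other than `block k (x - 1)` is
exhaustive and ends at `block k (x - 1)`; the run from `block k (x - 1)` is exhaustive as well, and
where it ends depends on the parity of `k`. Any other starting word leaves behind free words below
its last one or in its own layer, and the algorithm gets stuck at `block k (x - 1)`.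
-/

section GreedyRuns

variable {α β : Type*} {M : α → ℕ → ℕ → α → Prop} {N : β → ℕ → ℕ → β → Prop}

/-- One step of the greedy algorithm. A state is a pair `(F, c)` of the set `F` of free objects,
those that have not been listed yet, and the current object `c`; `M c i j d` says that the move
labelled `(i, j)` turns `c` into `d`. The step takes the move into `F` with least label. -/
def GreedyStep (M : α → ℕ → ℕ → α → Prop) (σ τ : Set α × α) : Prop :=
  (∃ i j, M σ.2 i j τ.2 ∧ τ.2 ∈ σ.1 ∧
    ∀ i' j' d, M σ.2 i' j' d → d ∈ σ.1 → i < i' ∨ (i = i' ∧ j ≤ j')) ∧ τ.1 = σ.1 \ {τ.2}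

/-- Finitely many steps of the greedy algorithm. -/
def GreedyRun (M : α → ℕ → ℕ → α → Prop) : Set α × α → Set α × α → Prop :=
  Relation.ReflTransGen (GreedyStep M)

/-- The states, in the sense of `GreedyStep`, in which the greedy algorithm halts. -/
def Halted (M : α → ℕ → ℕ → α → Prop) (σ : Set α × α) : Prop :=
  ∀ i j d, M σ.2 i j d → d ∉ σ.1

/-- The states, in the sense of `GreedyStep`, that involve only objects of `A` and whose current
object is no longer free. -/
def StateIn (A : Set α) (σ : Set α × α) : Prop :=
  σ.1 ⊆ A ∧ σ.2 ∈ A \ σ.1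

theorem halted_empty (c : α) : Halted M (∅, c) :=
  fun _ _ _ _ => Set.notMem_empty _

theorem Halted.not_greedyStep {σ τ : Set α × α} (h : Halted M σ) : ¬ GreedyStep M σ τ :=
  fun ⟨⟨i, j, hM, hF, _⟩, _⟩ => h i j _ hM hF

theorem stateIn_diff_singleton {A : Set α} {c : α} (hc : c ∈ A) : StateIn A (A \ {c}, c) :=
  ⟨Set.sdiff_subset, hc, fun h => h.2 rfl⟩

theorem GreedyStep.stateIn {A : Set α} {σ τ : Set α × α} (h : GreedyStep M σ τ)
    (hσ : StateIn A σ) : StateIn A τ := by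
  obtain ⟨⟨_, _, -, hmem, -⟩, hτ⟩ := h
  rw [StateIn, hτ]
  exact ⟨Set.sdiff_subset.trans hσ.1, hσ.1 hmem, fun h => h.2 rfl⟩

theorem GreedyRun.stateIn {A : Set α} {σ τ : Set α × α} (h : GreedyRun M σ τ)
    (hσ : StateIn A σ) : StateIn A τ := by
  induction h with
  | refl => exact hσ
  | tail _ hstep ih => exact hstep.stateIn ih

theorem GreedyStep.rightUnique (hM : ∀ c i j d d', M c i j d → M c i j d' → d = d') :
    Relator.RightUnique (GreedyStep M) := by
  rintro σ ⟨F, d⟩ ⟨F', d'⟩ ⟨⟨i, j, hd, hdF, hmin⟩, hF⟩ ⟨⟨i', j', hd', hdF', hmin'⟩, hF'⟩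
  have hle := hmin _ _ _ hd' hdF'
  have hge := hmin' _ _ _ hd hdF
  obtain ⟨rfl, rfl⟩ : i = i' ∧ j = j' := by omega
  obtain rfl : d = d' := hM _ _ _ _ _ hd hd'
  exact Prod.ext (hF.trans hF'.symm) rfl

theorem GreedyRun.eq_of_halted (hM : ∀ c i j d d', M c i j d → M c i j d' → d = d')
    {σ τ τ' : Set α × α} (h : GreedyRun M σ τ) (h' : GreedyRun M σ τ') (hτ : Halted M τ)
    (hτ' : Halted M τ') : τ = τ' := by
  rcases Relation.ReflTransGen.total_of_right_unique (GreedyStep.rightUnique hM) h h' with h | h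
  · rcases h.cases_head with h | ⟨_, hstep, _⟩
    exacts [h, absurd hstep hτ.not_greedyStep]
  · rcases h.cases_head with h | ⟨_, hstep, _⟩
    exacts [h.symm, absurd hstep hτ'.not_greedyStep]

section Transfer

variable {A : Set α} {f : α → β} {σ τ : Set α × α}

theorem GreedyStep.map (hf : A.InjOn f)
    (hMN : ∀ c ∈ A, ∀ d ∈ A, c ≠ d → ∀ i j, M c i j d ↔ N (f c) i j (f d))
    (h : GreedyStep M σ τ) (hσ : StateIn A σ) :
    GreedyStep N (f '' σ.1, f σ.2) (f '' τ.1, f τ.2) := by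
  obtain ⟨⟨i, j, hmove, hmem, hmin⟩, hτ⟩ := h
  have hne : ∀ d ∈ σ.1, σ.2 ≠ d := fun d hd heq => hσ.2.2 (heq ▸ hd)
  have hmove_iff : ∀ d ∈ σ.1, ∀ i j, M σ.2 i j d ↔ N (f σ.2) i j (f d) :=
    fun d hd => hMN _ hσ.2.1 d (hσ.1 hd) (hne d hd)
  refine ⟨⟨i, j, (hmove_iff _ hmem i j).1 hmove, Set.mem_image_of_mem f hmem, ?_⟩, ?_⟩
  · rintro i' j' _ hmove' ⟨d, hd, rfl⟩
    exact hmin i' j' d ((hmove_iff d hd i' j').2 hmove') hd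
  · dsimp only
    rw [hτ, (hf.mono hσ.1).image_sdiff_subset (Set.singleton_subset_iff.2 hmem),
      Set.image_singleton]

theorem GreedyRun.map (hf : A.InjOn f)
    (hMN : ∀ c ∈ A, ∀ d ∈ A, c ≠ d → ∀ i j, M c i j d ↔ N (f c) i j (f d))
    (h : GreedyRun M σ τ) (hσ : StateIn A σ) :
    GreedyRun N (f '' σ.1, f σ.2) (f '' τ.1, f τ.2) := by
  induction h with
  | refl => exact .refl
  | tail hrun hstep ih => exact ih.tail (hstep.map hf hMN (GreedyRun.stateIn hrun hσ))

theorem Halted.map (hMN : ∀ c ∈ A, ∀ d ∈ A, c ≠ d → ∀ i j, M c i j d ↔ N (f c) i j (f d))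
    (h : Halted M σ) (hσ : StateIn A σ) : Halted N (f '' σ.1, f σ.2) := by
  rintro i j _ hmove ⟨d, hd, rfl⟩
  have hne : σ.2 ≠ d := fun heq => hσ.2.2 (heq ▸ hd)
  exact h i j d ((hMN _ hσ.2.1 d (hσ.1 hd) hne i j).2 hmove) hd

end Transfer

end GreedyRuns

/-- The move `(i, j)` on words: the homogeneous transposition of a `1` at `i` and a `0` at `j`. -/
def WordMove (w : List Bool) (i j : ℕ) (w' : List Bool) : Prop :=
  okT w i j ∧ w' = applyT w i j

/-- `L` is an initial segment of the greedy list: `IsGreedyList` without the halting condition. -/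
def IsGreedyPrefix (P : List Bool → Prop) (α : List Bool) (L : List (List Bool)) : Prop :=
  L.head? = some α ∧ L.Nodup ∧ (∀ w ∈ L, P w) ∧
  ∀ m, m + 1 < L.length →
    ∃ i j, okT (L.getD m []) i j ∧ L.getD (m + 1) [] = applyT (L.getD m []) i j ∧
      ∀ i' j', okT (L.getD m []) i' j' → P (applyT (L.getD m []) i' j') →
        applyT (L.getD m []) i' j' ∉ L.take (m + 1) → i < i' ∨ (i = i' ∧ j ≤ j')

section GreedyLists

variable {P : List Bool → Prop} {α : List Bool}

theorem greedyStep_wordMove_iff {F : Set (List Bool)} {v w : List Bool} :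
    GreedyStep WordMove (F, v) (F \ {w}, w) ↔ w ∈ F ∧ ∃ i j, okT v i j ∧ w = applyT v i j ∧
      ∀ i' j', okT v i' j' → applyT v i' j' ∈ F → i < i' ∨ (i = i' ∧ j ≤ j') := by
  simp only [GreedyStep, WordMove, and_true]
  constructor
  · rintro ⟨i, j, ⟨hok, hw⟩, hwF, hmin⟩
    exact ⟨hwF, i, j, hok, hw, fun i' j' hok' => hmin i' j' _ ⟨hok', rfl⟩⟩
  · rintro ⟨hwF, i, j, hok, hw, hmin⟩
    exact ⟨i, j, ⟨hok, hw⟩, hwF, fun i' j' _ ⟨hok', hd⟩ hF => hmin i' j' hok' (hd ▸ hF)⟩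

theorem isGreedyPrefix_concat (l : List (List Bool)) (v w : List Bool) :
    IsGreedyPrefix P α (l ++ [v] ++ [w]) ↔ IsGreedyPrefix P α (l ++ [v]) ∧
      GreedyStep WordMove ({u | P u ∧ u ∉ l ++ [v]}, v) ({u | P u ∧ u ∉ l ++ [v] ++ [w]}, w) := by
  have hfree : {u | P u ∧ u ∉ l ++ [v] ++ [w]} = {u | P u ∧ u ∉ l ++ [v]} \ {w} := by
    ext u
    simp only [List.mem_append, List.mem_singleton, Set.mem_ofPred_eq, Set.mem_sdiff,
      Set.mem_singleton_iff, not_or, and_assoc]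
  have hinit : ∀ m < l.length, (l ++ [v] ++ [w]).getD m [] = (l ++ [v]).getD m [] ∧
      (l ++ [v] ++ [w]).getD (m + 1) [] = (l ++ [v]).getD (m + 1) [] ∧
      (l ++ [v] ++ [w]).take (m + 1) = (l ++ [v]).take (m + 1) := fun m hm =>
    ⟨List.getD_append _ _ _ _ (by simp; omega), List.getD_append _ _ _ _ (by simp; omega),
      List.take_append_of_le_length (by simp; omega)⟩
  have hcur : (l ++ [v] ++ [w]).getD l.length [] = v ∧
      (l ++ [v] ++ [w]).getD (l.length + 1) [] = w ∧
      (l ++ [v] ++ [w]).take (l.length + 1) = l ++ [v] := by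
    refine ⟨by simp, ?_, List.take_left' (by simp)⟩
    rw [List.getD_append_right _ _ _ _ (by simp)]
    simp
  have hlen : (l ++ [v] ++ [w]).length = l.length + 2 := by simp
  have hlen' : (l ++ [v]).length = l.length + 1 := by simp
  rw [hfree, greedyStep_wordMove_iff]
  simp only [IsGreedyPrefix, hlen, hlen', Nat.add_lt_add_iff_right, Nat.forall_lt_succ_right, hcur]
  have hhead : (l ++ [v] ++ [w]).head? = (l ++ [v]).head? := by cases l <;> rfl
  have hnodup : (l ++ [v] ++ [w]).Nodup ↔ (l ++ [v]).Nodup ∧ w ∉ l ++ [v] := by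
    rw [List.nodup_append_comm, List.singleton_append, List.nodup_cons, and_comm]
  have hP : (∀ u ∈ l ++ [v] ++ [w], P u) ↔ (∀ u ∈ l ++ [v], P u) ∧ P w := by
    rw [List.forall_mem_append, List.forall_mem_singleton]
  rw [hhead, hnodup, hP]
  simp +contextual only [hinit, Set.mem_ofPred_eq, and_imp]
  tauto

theorem exists_isGreedyPrefix_of_greedyRun {F : Set (List Bool)} {w : List Bool} (hα : P α)
    (h : GreedyRun WordMove ({u | P u} \ {α}, α) (F, w)) :
    ∃ l, IsGreedyPrefix P α (l ++ [w]) ∧ F = {u | P u ∧ u ∉ l ++ [w]} := by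
  generalize hτ : (F, w) = τ at h
  induction h generalizing F w with
  | refl =>
    cases hτ
    exact ⟨[], by simp [IsGreedyPrefix, hα], by ext; simp⟩
  | @tail σ τ _ hstep ih =>
    subst hτ
    obtain ⟨l, hl, hF⟩ := ih rfl
    have hF' : F = {u | P u ∧ u ∉ l ++ [σ.2] ++ [w]} := by
      obtain ⟨-, hstepF : F = σ.1 \ {w}⟩ := hstep
      rw [hstepF, hF]
      ext u
      simp [and_assoc]
    refine ⟨l ++ [σ.2], (isGreedyPrefix_concat l σ.2 w).2 ⟨hl, ?_⟩, hF'⟩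
    rwa [← hF, ← hF']

theorem IsGreedyPrefix.greedyRun {l : List (List Bool)} {w : List Bool}
    (h : IsGreedyPrefix P α (l ++ [w])) :
    GreedyRun WordMove ({u | P u} \ {α}, α) ({u | P u ∧ u ∉ l ++ [w]}, w) := by
  induction l using List.reverseRecOn generalizing w with
  | nil =>
    obtain rfl : w = α := by simpa using h.1
    have hfree : {u | P u} \ {w} = {u | P u ∧ u ∉ [] ++ [w]} := by ext; simp
    rw [hfree]
    exact .refl
  | append_singleton l v ih =>
    obtain ⟨hl, hstep⟩ := (isGreedyPrefix_concat l v w).1 h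
    exact (ih hl).tail hstep

theorem isGen_iff_greedyRun :
    IsGen P α ↔ P α ∧ ∃ w, GreedyRun WordMove ({u | P u} \ {α}, α) (∅, w) := by
  refine and_congr_right fun hα => ⟨?_, ?_⟩
  · rintro ⟨L, ⟨hhead, hnodup, hP, hsteps, -⟩, hall⟩
    rcases L.eq_nil_or_concat' with rfl | ⟨l, w, rfl⟩
    · exact absurd (hall α hα) List.not_mem_nil
    · have hempty : {u | P u ∧ u ∉ l ++ [w]} = ∅ :=
        Set.eq_empty_of_forall_notMem fun u hu => hu.2 (hall u hu.1)
      exact ⟨w, hempty ▸ IsGreedyPrefix.greedyRun ⟨hhead, hnodup, hP, hsteps⟩⟩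
  · rintro ⟨w, hrun⟩
    obtain ⟨l, ⟨hhead, hnodup, hP, hsteps⟩, hempty⟩ := exists_isGreedyPrefix_of_greedyRun hα hrun
    have hall : ∀ u, P u → u ∈ l ++ [w] := fun u hu => by
      by_contra hmem
      exact hempty.symm.subset ⟨hu, hmem⟩
    exact ⟨l ++ [w], ⟨hhead, hnodup, hP, hsteps, fun _ _ _ hPu => hall _ hPu⟩, hall⟩

end GreedyLists

/-- The leftmost position, counted from `0`, of the `(k + 1)`-st one of a word in which every prefix
has at least `p` times as many zeros as ones. -/
abbrev minPos (p k : ℕ) : ℕ := (p + 1) * k + p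

/-- The lists with head `y ∈ H` and tail in `B y`: the union over `y ∈ H` of the layers of `B`. -/
def layers (B : ℕ → Set (List ℕ)) (H : Set ℕ) : Set (List ℕ) :=
  {c | ∃ y ∈ H, ∃ s ∈ B y, y :: s = c}

/-- The words of `C_x(p, k)`, encoded by the positions of their ones in decreasing order. -/
def ballots (p : ℕ) : ℕ → ℕ → Set (List ℕ)
  | 0, _ => {[]}
  | k + 1, x => layers (ballots p k) (Set.Ico (minPos p k) x)

/-- The position list of `k` consecutive ones of which the last is at `e`; sensible if `k ≤ e + 1`,
since subtraction truncates. -/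
def block : ℕ → ℕ → List ℕ
  | 0, _ => []
  | k + 1, e => e :: block k (e - 1)

/-- The position list of `0⋯01⋯101` with `k` ones of which the last is as far left as possible. -/
def gapBlock (p : ℕ) : ℕ → List ℕ
  | 0 => []
  | k + 1 => minPos p k :: block k (minPos p k - 2)

/-- The words of `Gen_p(x, k)`, as position lists: either the last one is as far left as possible
and the rest is a generator, or all ones are consecutive. -/
def generators (p : ℕ) : ℕ → ℕ → Finset (List ℕ)
  | 0, _ => {[]}
  | k + 1, x => (generators p k (minPos p k)).image (List.cons (minPos p k)) ∪
      (Finset.Ioo (minPos p k) x).image (block (k + 1))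

section PositionLists

variable {p k x y e : ℕ} {s : List ℕ} {B : ℕ → Set (List ℕ)} {H H' : Set ℕ}

@[simp]
theorem cons_mem_layers : y :: s ∈ layers B H ↔ y ∈ H ∧ s ∈ B y := by
  simp [layers]

@[simp]
theorem nil_notMem_layers : [] ∉ layers B H := by
  simp [layers]

@[simp]
theorem layers_empty : layers B ∅ = ∅ := by
  simp [layers]

theorem layers_mono (h : H ⊆ H') : layers B H ⊆ layers B H' := by
  rintro _ ⟨y, hy, s, hs, rfl⟩
  exact ⟨y, h hy, s, hs, rfl⟩

theorem layers_union : layers B (H ∪ H') = layers B H ∪ layers B H' := by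
  ext (_ | ⟨y, s⟩) <;> simp [or_and_right]

theorem layers_sdiff : layers B H \ layers B H' = layers B (H \ H') := by
  ext (_ | ⟨y, s⟩)
  · simp
  · simp only [Set.mem_sdiff, cons_mem_layers]
    tauto

theorem cons_mem_ballots_succ :
    y :: s ∈ ballots p (k + 1) x ↔ (minPos p k ≤ y ∧ y < x) ∧ s ∈ ballots p k y :=
  cons_mem_layers

theorem ballots_mono (h : x ≤ y) : ballots p k x ⊆ ballots p k y := by
  cases k with
  | zero => exact subset_rfl
  | succ k => exact layers_mono (Set.Ico_subset_Ico_right h)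

theorem lt_of_mem_of_mem_ballots (hs : s ∈ ballots p k x) (he : e ∈ s) : e < x := by
  induction k generalizing x s with
  | zero => simp_all [ballots]
  | succ k ih =>
    obtain ⟨y, hy, t, ht, rfl⟩ := hs
    rcases List.mem_cons.1 he with rfl | he
    exacts [hy.2, (ih ht he).trans hy.2]

theorem pairwise_gt_of_mem_ballots (hs : s ∈ ballots p k x) : s.Pairwise (· > ·) := by
  induction k generalizing x s with
  | zero => simp_all [ballots]
  | succ k ih =>
    obtain ⟨y, -, t, ht, rfl⟩ := hs
    exact List.pairwise_cons.2 ⟨fun _ => lt_of_mem_of_mem_ballots ht, ih ht⟩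

theorem block_injective (hk : k ≠ 0) : Function.Injective (block k) := by
  obtain ⟨k, rfl⟩ := Nat.exists_eq_succ_of_ne_zero hk
  exact fun _ _ h => (List.cons.inj h).1

theorem lt_of_block_mem_ballots (hk : k ≠ 0) (h : block k e ∈ ballots p k x) : e < x := by
  obtain ⟨k, rfl⟩ := Nat.exists_eq_succ_of_ne_zero hk
  exact (cons_mem_ballots_succ.1 h).1.2

theorem block_mem_ballots (hp : 1 ≤ p) (hex : e < x) (he : (p + 1) * k ≤ e + 1) :
    block k e ∈ ballots p k x := by
  induction k generalizing e x with
  | zero => rfl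
  | succ k ih =>
    exact cons_mem_ballots_succ.2 ⟨⟨by lia, hex⟩, ih (by lia) (by lia)⟩

theorem cons_mem_generators_succ :
    y :: s ∈ generators p (k + 1) x ↔ y = minPos p k ∧ s ∈ generators p k (minPos p k) ∨
      minPos p k < y ∧ y < x ∧ s = block k (y - 1) := by
  simp only [generators, Finset.mem_union, Finset.mem_image, List.cons.injEq, Finset.mem_Ioo,
    block]
  grind

theorem nil_notMem_generators_succ : [] ∉ generators p (k + 1) x := by
  simp [generators, block]

theorem block_mem_generators (hp : 1 ≤ p) (hex : e < x) (he : (p + 1) * k ≤ e + 1) :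
    block k e ∈ generators p k x := by
  induction k generalizing e x with
  | zero => exact Finset.mem_singleton_self _
  | succ k ih =>
    refine cons_mem_generators_succ.2 ?_
    rcases (show minPos p k ≤ e by lia).eq_or_lt with rfl | hlt
    · exact .inl ⟨rfl, ih (by lia) (by lia)⟩
    · exact .inr ⟨hlt, hex, rfl⟩

theorem gapBlock_mem_generators (hp : 1 ≤ p) : gapBlock p k ∈ generators p k x := by
  cases k with
  | zero => exact Finset.mem_singleton_self _
  | succ k =>
    exact cons_mem_generators_succ.2 (.inl ⟨rfl, block_mem_generators hp (by lia) (by lia)⟩)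

theorem generators_subset_ballots (hp : 1 ≤ p) (hx : (p + 1) * k ≤ x)
    (hs : s ∈ generators p k x) : s ∈ ballots p k x := by
  induction k generalizing x s with
  | zero => exact Finset.mem_singleton.1 hs
  | succ k ih =>
    cases s with
    | nil => exact absurd hs nil_notMem_generators_succ
    | cons y s =>
      rw [cons_mem_ballots_succ]
      rcases cons_mem_generators_succ.1 hs with ⟨rfl, htail⟩ | ⟨hy, hyx, rfl⟩
      · exact ⟨⟨le_rfl, by lia⟩, ih (by lia) htail⟩
      · exact ⟨⟨hy.le, hyx⟩, block_mem_ballots hp (by lia) (by lia)⟩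

theorem gapBlock_mem_ballots (hp : 1 ≤ p) (hx : (p + 1) * k ≤ x) : gapBlock p k ∈ ballots p k x :=
  generators_subset_ballots hp hx (gapBlock_mem_generators hp)

theorem gapBlock_ne_block (hk : k ≠ 0) (he : (p + 1) * k ≤ e) :
    gapBlock p k ≠ block k e := by
  obtain ⟨k, rfl⟩ := Nat.exists_eq_succ_of_ne_zero hk
  intro h
  have hhead := (List.cons.inj h).1
  lia

end PositionLists

/-- The move `(i, j)` on position lists: the entry `i` becomes `j` and all others stay put. Between
decreasing lists this is a homogeneous transposition of words, see `shift_iff_wordMove`. -/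
def Shift (c : List ℕ) (i j : ℕ) (d : List ℕ) : Prop :=
  ∃ a r, c = a ++ i :: r ∧ d = a ++ j :: r

/-- The greedy algorithm, started at `c`, lists all of `ballots p k x` and ends with `c'`. -/
def Exhausts (p k x : ℕ) (c c' : List ℕ) : Prop :=
  GreedyRun Shift (ballots p k x \ {c}, c) (∅, c')

theorem shift_cons_iff {y i j : ℕ} {r d : List ℕ} :
    Shift (y :: r) i j d ↔ (i = y ∧ d = j :: r) ∨ ∃ s, d = y :: s ∧ Shift r i j s := by
  constructor
  · rintro ⟨_ | ⟨z, a⟩, r', hc, rfl⟩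
    · obtain ⟨rfl, rfl⟩ := List.cons.inj hc
      exact .inl ⟨rfl, rfl⟩
    · obtain ⟨rfl, rfl⟩ := List.cons.inj hc
      exact .inr ⟨_, rfl, a, r', rfl, rfl⟩
  · rintro (⟨rfl, rfl⟩ | ⟨s, rfl, a, r', rfl, rfl⟩)
    exacts [⟨[], r, rfl, rfl⟩, ⟨y :: a, r', rfl, rfl⟩]

theorem Shift.mem {c d : List ℕ} {i j : ℕ} (h : Shift c i j d) : i ∈ c := by
  obtain ⟨a, r, rfl, -⟩ := h
  exact List.mem_append_right _ List.mem_cons_self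

section Layers

variable {p k x y z e t : ℕ} {r r' : List ℕ} {F U : Set (List ℕ)}

-- A move of the tail has a smaller label than any move of the head, so it takes precedence.
theorem GreedyStep.cons {A : Set (List ℕ)} {σ τ : Set (List ℕ) × List ℕ}
    (hU : ∀ s, y :: s ∉ U) (hlt : ∀ c ∈ A, ∀ i ∈ c, i < y) (hσ : StateIn A σ)
    (h : GreedyStep Shift σ τ) :
    GreedyStep Shift (U ∪ List.cons y '' σ.1, y :: σ.2) (U ∪ List.cons y '' τ.1, y :: τ.2) := by
  obtain ⟨⟨i, j, hmove, hmem, hmin⟩, hτ⟩ := h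
  refine ⟨⟨i, j, shift_cons_iff.2 (.inr ⟨_, rfl, hmove⟩), .inr ⟨_, hmem, rfl⟩, ?_⟩, ?_⟩
  · intro i' j' d hmove' hd
    rcases shift_cons_iff.1 hmove' with ⟨rfl, -⟩ | ⟨s, rfl, htail⟩
    · exact .inl (hlt _ hσ.2.1 i hmove.mem)
    · refine hmin i' j' s htail ?_
      simpa [hU] using hd
  · ext (_ | ⟨v, s⟩)
    · simp [hτ]
    · simp only [hτ, Set.mem_union, Set.mem_image, Set.mem_sdiff, Set.mem_singleton_iff,
        List.cons.injEq]
      grind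

theorem GreedyRun.cons {A : Set (List ℕ)} {σ τ : Set (List ℕ) × List ℕ}
    (hU : ∀ s, y :: s ∉ U) (hlt : ∀ c ∈ A, ∀ i ∈ c, i < y) (hσ : StateIn A σ)
    (h : GreedyRun Shift σ τ) :
    GreedyRun Shift (U ∪ List.cons y '' σ.1, y :: σ.2) (U ∪ List.cons y '' τ.1, y :: τ.2) := by
  induction h with
  | refl => exact .refl
  | tail hrun hstep ih => exact ih.tail (hstep.cons hU hlt (GreedyRun.stateIn hrun hσ))

theorem run_layer {G : Set (List ℕ)} (hF : F ⊆ layers (ballots p k) Set.univ)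
    (hy : layers (ballots p k) {y} ⊆ F) (hr : r ∈ ballots p k y)
    (h : GreedyRun Shift (ballots p k y \ {r}, r) (G, r')) :
    GreedyRun Shift (F \ {y :: r}, y :: r)
      (F \ layers (ballots p k) {y} ∪ List.cons y '' G, y :: r') := by
  have hlayer : ∀ s, y :: s ∈ F ↔ s ∈ ballots p k y := fun s =>
    ⟨fun hs => (cons_mem_layers.1 (hF hs)).2, fun hs => hy (cons_mem_layers.2 ⟨rfl, hs⟩)⟩
  have hF_eq : F \ {y :: r} =
      F \ layers (ballots p k) {y} ∪ List.cons y '' (ballots p k y \ {r}) := by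
    ext (_ | ⟨z, s⟩)
    · simp
    · simp only [Set.mem_sdiff, Set.mem_singleton_iff, List.cons.injEq, Set.mem_union,
        cons_mem_layers, Set.mem_image]
      grind
  rw [hF_eq]
  refine GreedyRun.cons (fun s hs => hs.2 ?_) (fun _ hc _ => lt_of_mem_of_mem_ballots hc)
    (stateIn_diff_singleton hr) h
  exact cons_mem_layers.2 ⟨rfl, (hlayer s).1 hs.1⟩

theorem Exhausts.sweep (h : Exhausts p k y r r') (hF : F ⊆ layers (ballots p k) Set.univ)
    (hy : layers (ballots p k) {y} ⊆ F) (hr : r ∈ ballots p k y) :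
    GreedyRun Shift (F \ {y :: r}, y :: r) (F \ layers (ballots p k) {y}, y :: r') := by
  simpa only [Set.image_empty, Set.union_empty] using run_layer hF hy hr h

theorem greedyStep_head (hr : Halted Shift (List.cons y ⁻¹' F, r))
    (hz : IsLeast {z | z :: r ∈ F} z) : GreedyStep Shift (F, y :: r) (F \ {z :: r}, z :: r) := by
  refine ⟨⟨y, z, shift_cons_iff.2 (.inl ⟨rfl, rfl⟩), hz.1, fun i j d hmove hd => ?_⟩, rfl⟩
  rcases shift_cons_iff.1 hmove with ⟨rfl, rfl⟩ | ⟨s, rfl, htail⟩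
  · exact .inr ⟨rfl, hz.2 hd⟩
  · exact absurd hd (hr i j s htail)

/-- What the greedy algorithm does on `ballots p k x`, for every `x`, from each starting point. -/
structure GreedyOutcome (p k : ℕ) : Prop where
  of_ne_top : ∀ {x c}, (p + 1) * k ≤ x → c ∈ generators p k x → (k = 0 ∨ c ≠ block k (x - 1)) →
    Exhausts p k x c (block k (x - 1))
  of_even : ∀ {x}, Even k → (p + 1) * k ≤ x → Exhausts p k x (block k (x - 1)) (gapBlock p k)
  of_odd : ∀ {x}, Odd k → (p + 1) * k < x →
    Exhausts p k x (block k (x - 1)) (block k (x - 2))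
  of_notMem_generators : ∀ {x c}, c ∈ ballots p k x → c ∉ generators p k x →
    ∃ F, F.Nonempty ∧ GreedyRun Shift (ballots p k x \ {c}, c) (F, block k (x - 1)) ∧
      Halted Shift (F, block k (x - 1))

theorem GreedyOutcome.ascend (h : GreedyOutcome p k) (hp : 1 ≤ p) (hz : (p + 1) * k ≤ z)
    (hzt : z ≤ t) (hF : F ⊆ layers (ballots p k) Set.univ)
    (hlayers : layers (ballots p k) (Set.Icc z t) ⊆ F)
    (hbelow : ∀ y < z, ∀ t ≥ z, y :: block k (t - 1) ∉ F) (hr : r ∈ ballots p k z)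
    (hex : Exhausts p k z r (block k (z - 1))) :
    GreedyRun Shift (F \ {z :: r}, z :: r)
      (F \ layers (ballots p k) (Set.Icc z t), t :: block k (t - 1)) := by
  induction t, hzt using Nat.le_induction with
  | base =>
    rw [Set.Icc_self] at hlayers ⊢
    exact hex.sweep hF hlayers hr
  | succ t hzt ih =>
    have hIcc : Set.Icc z (t + 1) = Set.Icc z t ∪ {t + 1} := by grind
    rw [hIcc, layers_union, ← Set.sdiff_sdiff]
    rw [hIcc, layers_union, Set.union_subset_iff] at hlayers
    set E := F \ layers (ballots p k) (Set.Icc z t)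
    have hE_layer : layers (ballots p k) {t + 1} ⊆ E := by
      rintro _ ⟨_, rfl, s, hs, rfl⟩
      refine ⟨hlayers.2 (cons_mem_layers.2 ⟨rfl, hs⟩), fun hmem => ?_⟩
      exact absurd (cons_mem_layers.1 hmem).1.2 (Nat.not_succ_le_self t)
    have hE_notMem : ∀ y ∈ Set.Icc z t, ∀ s, y :: s ∉ E := fun y hy s hs =>
      hs.2 (cons_mem_layers.2 ⟨hy, (cons_mem_layers.1 (hF hs.1)).2⟩)
    have hblock : block k (t - 1) ∈ ballots p k (t + 1) := block_mem_ballots hp (by lia) (by lia)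
    have hleast : IsLeast {y | y :: block k (t - 1) ∈ E} (t + 1) := by
      refine ⟨hE_layer (cons_mem_layers.2 ⟨rfl, hblock⟩), fun y hy => ?_⟩
      by_contra! hyt
      rcases lt_or_ge y z with hyz | hyz
      · exact hbelow y hyz t hzt hy.1
      · exact hE_notMem y ⟨hyz, Nat.le_of_lt_succ hyt⟩ _ hy
    have hjump := greedyStep_head (fun _ _ s _ => hE_notMem t ⟨hzt, le_rfl⟩ s) hleast
    have hnext : Exhausts p k (t + 1) (block k (t - 1)) (block k t) :=
      h.of_ne_top (by lia) (block_mem_generators hp (by lia) (by lia)) <|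
        or_iff_not_imp_left.2 fun hk heq => by have := block_injective hk heq; lia
    exact ((ih hlayers.1).tail hjump).trans
      (hnext.sweep (Set.sdiff_subset.trans hF) hE_layer hblock)

theorem GreedyOutcome.descend (h : GreedyOutcome p k) (hp : 1 ≤ p) (hk : Odd k)
    (he : minPos p k ≤ e) (hF : F ⊆ layers (ballots p k) Set.univ)
    (hlayers : layers (ballots p k) (Set.Icc (minPos p k) e) ⊆ F) :
    GreedyRun Shift (F \ {block (k + 1) e}, block (k + 1) e)
      (F \ layers (ballots p k) (Set.Icc (minPos p k) e), gapBlock p (k + 1)) := by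
  have hsweep : ∀ e' ≥ minPos p k, ∀ F' ⊆ layers (ballots p k) Set.univ,
      layers (ballots p k) {e'} ⊆ F' → GreedyRun Shift (F' \ {block (k + 1) e'}, block (k + 1) e')
        (F' \ layers (ballots p k) {e'}, e' :: block k (e' - 2)) := fun e' he' F' hF' hlayer =>
    (h.of_odd hk (by lia)).sweep hF' hlayer (block_mem_ballots hp (by lia) (by lia))
  induction e, he using Nat.le_induction generalizing F with
  | base =>
    rw [Set.Icc_self] at hlayers ⊢
    exact hsweep _ le_rfl F hF hlayers
  | succ e he ih =>
    have hIcc : Set.Icc (minPos p k) (e + 1) = {e + 1} ∪ Set.Icc (minPos p k) e := by grind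
    rw [hIcc, layers_union, ← Set.sdiff_sdiff]
    rw [hIcc, layers_union, Set.union_subset_iff] at hlayers
    have hrest : layers (ballots p k) (Set.Icc (minPos p k) e) ⊆
        F \ layers (ballots p k) {e + 1} := by
      rintro _ ⟨y, hy, s, hs, rfl⟩
      refine ⟨hlayers.2 (cons_mem_layers.2 ⟨hy, hs⟩), fun hmem => ?_⟩
      have := hy.2
      have : y = e + 1 := (cons_mem_layers.1 hmem).1
      lia
    have hleast : IsLeast {y | y :: block k (e - 1) ∈ F \ layers (ballots p k) {e + 1}} e := by
      refine ⟨hrest (cons_mem_layers.2 ⟨⟨he, le_rfl⟩, ?_⟩), fun y hy => ?_⟩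
      · exact block_mem_ballots hp (by lia) (by lia)
      · have := lt_of_block_mem_ballots hk.pos.ne' (cons_mem_layers.1 (hF hy.1)).2
        lia
    have htail : Halted Shift (List.cons (e + 1) ⁻¹' (F \ layers (ballots p k) {e + 1}),
        block k (e - 1)) := fun _ _ s _ hs =>
      hs.2 (cons_mem_layers.2 ⟨rfl, (cons_mem_layers.1 (hF hs.1)).2⟩)
    have hjump := greedyStep_head htail hleast
    exact ((hsweep (e + 1) (by lia) F hF hlayers.1).tail hjump).trans
      (ih (Set.sdiff_subset.trans hF) hrest)

theorem GreedyOutcome.ascend_of_isLeast (h : GreedyOutcome p k) (hp : 1 ≤ p)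
    (hz : (p + 1) * k ≤ z) (hzt : z ≤ t) (hF : F ⊆ layers (ballots p k) Set.univ)
    (hlayers : layers (ballots p k) (Set.Icc z t) ⊆ F)
    (hbelow : ∀ y < z, ∀ t ≥ z, y :: block k (t - 1) ∉ F)
    (hr : Halted Shift (List.cons y ⁻¹' F, r)) (hleast : IsLeast {z | z :: r ∈ F} z)
    (hex : Exhausts p k z r (block k (z - 1))) :
    GreedyRun Shift (F, y :: r) (F \ layers (ballots p k) (Set.Icc z t), block (k + 1) t) :=
  .head (greedyStep_head hr hleast) <|
    h.ascend hp hz hzt hF hlayers hbelow (cons_mem_layers.1 (hF hleast.1)).2 hex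

theorem GreedyOutcome.lower_of_odd (h : GreedyOutcome p k) (hp : 1 ≤ p) (hk : Odd k)
    (hy : minPos p k ≤ y) (hyx : y < x) :
    GreedyRun Shift (ballots p (k + 1) x \ {block (k + 1) y}, block (k + 1) y)
      (layers (ballots p k) (Set.Ioo y x), gapBlock p (k + 1)) := by
  have hIoo : Set.Ioo y x = Set.Ico (minPos p k) x \ Set.Icc (minPos p k) y := by grind
  rw [hIoo, ← layers_sdiff]
  exact h.descend hp hk hy (layers_mono (Set.subset_univ _)) (layers_mono (by grind))

theorem GreedyOutcome.lower_of_even (h : GreedyOutcome p k) (hp : 1 ≤ p) (hk : Even k)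
    (hy : minPos p k < y) (hyx : y < x) :
    GreedyRun Shift (ballots p (k + 1) x \ {block (k + 1) y}, block (k + 1) y)
      (layers (ballots p k) (Set.Ioo y x), block (k + 1) (y - 1)) := by
  have hgap : gapBlock p k ∈ ballots p k (minPos p k) := gapBlock_mem_ballots hp (by lia)
  set E := ballots p (k + 1) x \ layers (ballots p k) {y}
  have hE : E = layers (ballots p k) (Set.Ico (minPos p k) x \ {y}) := layers_sdiff
  have hsweep : GreedyRun Shift (ballots p (k + 1) x \ {block (k + 1) y}, block (k + 1) y)
      (E, y :: gapBlock p k) :=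
    (h.of_even hk (by lia)).sweep (layers_mono (Set.subset_univ _))
      (layers_mono (Set.singleton_subset_iff.2 ⟨hy.le, hyx⟩))
      (block_mem_ballots hp (by lia) (by lia))
  have hleast : IsLeast {z | z :: gapBlock p k ∈ E} (minPos p k) := by
    rw [hE]
    exact ⟨cons_mem_layers.2 ⟨by grind, hgap⟩, fun z hz => (cons_mem_layers.1 hz).1.1.1⟩
  have hIoo : Set.Ioo y x = (Set.Ico (minPos p k) x \ {y}) \ Set.Icc (minPos p k) (y - 1) := by
    grind
  rw [hIoo, ← layers_sdiff, ← hE]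
  refine hsweep.trans (h.ascend_of_isLeast hp (by lia) (by lia) ?_ ?_ ?_ ?_ hleast ?_)
  · exact hE.trans_subset (layers_mono (Set.subset_univ _))
  · exact (layers_mono (by grind)).trans hE.symm.subset
  · exact fun z hz _ _ hmem => hz.not_ge (cons_mem_ballots_succ.1 hmem.1).1.1
  · exact fun _ _ s _ hs => hs.2 (cons_mem_layers.2 ⟨rfl, (cons_mem_ballots_succ.1 hs.1).2⟩)
  · exact h.of_ne_top (by lia) (gapBlock_mem_generators hp)
      (or_iff_not_imp_left.2 fun hk => gapBlock_ne_block hk (by lia))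

theorem GreedyOutcome.ascend_to_top (h : GreedyOutcome p k) (hp : 1 ≤ p) (hy : minPos p k ≤ y)
    (hey : e ≤ y) (hyx : y + 1 < x) (hr : r ∈ generators p k (y + 1))
    (hne : k = 0 ∨ r ≠ block k y) :
    GreedyRun Shift (layers (ballots p k) (Set.Ioo y x), e :: r) (∅, block (k + 1) (x - 1)) := by
  have hleast : IsLeast {z | z :: r ∈ layers (ballots p k) (Set.Ioo y x)} (y + 1) :=
    ⟨cons_mem_layers.2 ⟨⟨y.lt_succ_self, hyx⟩, generators_subset_ballots hp (by lia) hr⟩,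
      fun z hz => (cons_mem_layers.1 hz).1.1⟩
  have hall : (∅ : Set (List ℕ)) =
      layers (ballots p k) (Set.Ioo y x) \ layers (ballots p k) (Set.Icc (y + 1) (x - 1)) :=
    (Set.sdiff_eq_empty.2 (layers_mono (by grind))).symm
  rw [hall]
  refine h.ascend_of_isLeast hp (by lia) (by lia) (layers_mono (Set.subset_univ _))
    (layers_mono (by grind)) ?_ ?_ hleast (h.of_ne_top (by lia) hr hne)
  · exact fun z hz _ _ hmem => (cons_mem_layers.1 hmem).1.1.not_ge (Nat.le_of_lt_succ hz)
  · exact fun _ _ s _ hs => hey.not_gt (cons_mem_layers.1 hs).1.1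

theorem GreedyOutcome.of_even_succ (h : GreedyOutcome p k) (hp : 1 ≤ p) (hk : Odd k)
    (hx : (p + 1) * (k + 1) ≤ x) :
    Exhausts p (k + 1) x (block (k + 1) (x - 1)) (gapBlock p (k + 1)) := by
  have hIoo : Set.Ioo (x - 1) x = ∅ := by grind
  simpa [Exhausts, hIoo] using
    h.lower_of_odd (x := x) (y := x - 1) hp hk (by lia) (by lia)

theorem GreedyOutcome.of_odd_succ (h : GreedyOutcome p k) (hp : 1 ≤ p) (hk : Even k)
    (hx : (p + 1) * (k + 1) < x) :
    Exhausts p (k + 1) x (block (k + 1) (x - 1)) (block (k + 1) (x - 2)) := by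
  have hIoo : Set.Ioo (x - 1) x = ∅ := by grind
  simpa [Exhausts, hIoo, Nat.sub_sub] using
    h.lower_of_even (x := x) (y := x - 1) hp hk (by lia) (by lia)

theorem GreedyOutcome.exists_exhausts_minPos (h : GreedyOutcome p k) (hp : 1 ≤ p)
    (hr : r ∈ generators p k (minPos p k)) :
    ∃ r', Exhausts p k (minPos p k) r r' ∧ r' ∈ generators p k (minPos p k + 1) ∧
      (k = 0 ∨ r' ≠ block k (minPos p k)) ∧
      (k = 0 ∨ r ≠ block k (minPos p k - 1) → r' = block k (minPos p k - 1)) := by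
  by_cases hne : k = 0 ∨ r ≠ block k (minPos p k - 1)
  · refine ⟨_, h.of_ne_top (by lia) hr hne, block_mem_generators hp (by lia) (by lia), ?_,
      fun _ => rfl⟩
    exact or_iff_not_imp_left.2 fun hk heq => by have := block_injective hk heq; lia
  · obtain ⟨hk, rfl⟩ : k ≠ 0 ∧ r = block k (minPos p k - 1) := by tauto
    rcases k.even_or_odd with heven | hodd
    · exact ⟨_, h.of_even heven (by lia), gapBlock_mem_generators hp,
        .inr (gapBlock_ne_block hk (by lia)), fun h => absurd h hne⟩
    · refine ⟨_, h.of_odd hodd (by lia), block_mem_generators hp (by lia) (by lia), .inr ?_,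
        fun h => absurd h hne⟩
      exact fun heq => by have := block_injective hk heq; lia

theorem GreedyOutcome.of_ne_top_succ (h : GreedyOutcome p k) (hp : 1 ≤ p) {c : List ℕ}
    (hx : (p + 1) * (k + 1) ≤ x) (hc : c ∈ generators p (k + 1) x)
    (hne : c ≠ block (k + 1) (x - 1)) :
    Exhausts p (k + 1) x c (block (k + 1) (x - 1)) := by
  obtain _ | ⟨y, r⟩ := c
  · exact absurd hc nil_notMem_generators_succ
  rcases cons_mem_generators_succ.1 hc with ⟨rfl, hr⟩ | ⟨hy, hyx, rfl⟩
  · obtain ⟨r', hex, hr', hr'_ne, hr'_eq⟩ := h.exists_exhausts_minPos hp hr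
    have hsweep := hex.sweep (F := ballots p (k + 1) x) (layers_mono (Set.subset_univ _))
      (layers_mono (by grind)) (generators_subset_ballots hp (by lia) hr)
    have hIoo : Set.Ico (minPos p k) x \ {minPos p k} = Set.Ioo (minPos p k) x := by grind
    rw [ballots, layers_sdiff, hIoo] at hsweep
    refine Relation.ReflTransGen.trans hsweep ?_
    rcases (show minPos p k + 1 ≤ x by lia).eq_or_lt with rfl | hlt
    · have hr_ne : r ≠ block k (minPos p k - 1) := fun heq => hne (heq ▸ rfl)
      rw [Set.Ioo_add_one_right_eq_Ioc, Set.Ioc_self, hr'_eq (.inr hr_ne), layers_empty]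
      exact .refl
    · exact h.ascend_to_top hp le_rfl le_rfl hlt hr' hr'_ne
  · have hyx' : y + 1 < x := by
      by_contra! hle
      obtain rfl : x = y + 1 := by lia
      exact hne rfl
    have hblock_ne : ∀ e ≠ y, k = 0 ∨ block k e ≠ block k y := fun e he =>
      or_iff_not_imp_left.2 fun hk => (block_injective hk).ne he
    rcases k.even_or_odd with heven | hodd
    · exact (h.lower_of_even hp heven hy hyx).trans <|
        h.ascend_to_top hp hy.le (y.sub_le 1) hyx' (block_mem_generators hp (by lia) (by lia))
          (hblock_ne _ (by lia))
    · exact (h.lower_of_odd hp hodd hy.le hyx).trans <|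
        h.ascend_to_top hp hy.le hy.le hyx' (block_mem_generators hp (by lia) (by lia))
          (hblock_ne _ (by lia))

theorem GreedyOutcome.exists_run_tail (h : GreedyOutcome p k) (hp : 1 ≤ p) (he : minPos p k ≤ e)
    (hex : e < x) (hr : r ∈ ballots p k e) (hgen : e :: r ∉ generators p (k + 1) x) :
    ∃ G, GreedyRun Shift (ballots p k e \ {r}, r) (G, block k (e - 1)) ∧
      Halted Shift (G, block k (e - 1)) ∧ (minPos p k < e ∨ G.Nonempty) := by
  rw [cons_mem_generators_succ] at hgen
  by_cases htail : r ∈ generators p k e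
  · have hlt : minPos p k < e := lt_of_le_of_ne he fun heq => hgen (.inl ⟨heq.symm, heq ▸ htail⟩)
    have hr_ne : r ≠ block k (e - 1) := fun heq => hgen (.inr ⟨hlt, hex, heq⟩)
    exact ⟨∅, h.of_ne_top (by lia) htail (.inr hr_ne), halted_empty _, .inl hlt⟩
  · obtain ⟨G, hG, hrun, hhalt⟩ := h.of_notMem_generators hr htail
    exact ⟨G, hrun, hhalt, .inr hG⟩

section LayersUnionImage

variable {B : ℕ → Set (List ℕ)} {H H' : Set ℕ} {G : Set (List ℕ)}

theorem cons_mem_layers_union_image :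
    z :: r ∈ layers B H ∪ List.cons e '' G ↔ (z ∈ H ∧ r ∈ B z) ∨ (z = e ∧ r ∈ G) := by
  simp [and_comm, eq_comm]

theorem layers_union_image_subset (hG : G ⊆ B e) :
    layers B H ∪ List.cons e '' G ⊆ layers B Set.univ := by
  refine Set.union_subset (layers_mono (Set.subset_univ _)) ?_
  rintro _ ⟨s, hs, rfl⟩
  exact cons_mem_layers.2 ⟨trivial, hG hs⟩

theorem layers_union_image_sdiff (he : e ∉ H') :
    (layers B H ∪ List.cons e '' G) \ layers B H' = layers B (H \ H') ∪ List.cons e '' G := by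
  ext (_ | ⟨z, s⟩)
  · simp
  · rw [Set.mem_sdiff, cons_mem_layers_union_image, cons_mem_layers_union_image, cons_mem_layers]
    grind

end LayersUnionImage

theorem GreedyOutcome.climb (h : GreedyOutcome p k) (hp : 1 ≤ p) (hk : k ≠ 0)
    {G : Set (List ℕ)} (he : minPos p k ≤ e) (hex : e < x)
    (hG : StateIn (ballots p k e) (G, block k (e - 1)))
    (hhalt : Halted Shift (G, block k (e - 1))) :
    GreedyRun Shift
      (layers (ballots p k) (Set.Ico (minPos p k) x \ {e}) ∪ List.cons e '' G,
        e :: block k (e - 1))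
      (layers (ballots p k) (Set.Ico (minPos p k) e) ∪ List.cons e '' G,
        block (k + 1) (x - 1)) := by
  rcases (Nat.succ_le_of_lt hex).eq_or_lt with rfl | hlt
  · have hIco : Set.Ico (minPos p k) (e + 1) \ {e} = Set.Ico (minPos p k) e := by grind
    rw [Nat.succ_eq_add_one, hIco]
    exact .refl
  set E := layers (ballots p k) (Set.Ico (minPos p k) x \ {e}) ∪ List.cons e '' G
  have hE : E ⊆ layers (ballots p k) Set.univ := layers_union_image_subset hG.1
  have hE_layers : layers (ballots p k) (Set.Icc (e + 1) (x - 1)) ⊆ E :=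
    (layers_mono (by grind)).trans Set.subset_union_left
  have hnext : block k (e - 1) ∈ ballots p k (e + 1) := block_mem_ballots hp (by lia) (by lia)
  have hleast : IsLeast {z | z :: block k (e - 1) ∈ E} (e + 1) := by
    refine ⟨hE_layers (cons_mem_layers.2 ⟨by grind, hnext⟩), fun z hz => ?_⟩
    rcases cons_mem_layers_union_image.1 hz with ⟨hz, hmem⟩ | ⟨-, hmem⟩
    · have := lt_of_block_mem_ballots hk hmem
      have : z ≠ e := hz.2
      lia
    · exact absurd hmem hG.2.2
  have hIco : Set.Ico (minPos p k) e =
      (Set.Ico (minPos p k) x \ {e}) \ Set.Icc (e + 1) (x - 1) := by grind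
  rw [hIco, ← layers_union_image_sdiff (by grind)]
  refine h.ascend_of_isLeast hp (by lia) (by lia) hE hE_layers ?_ ?_ hleast ?_
  · intro z hz t ht hmem
    have := lt_of_block_mem_ballots hk (cons_mem_layers.1 (hE hmem)).2
    lia
  · intro i j s hmove hmem
    rcases cons_mem_layers_union_image.1 hmem with ⟨he, -⟩ | ⟨-, hs⟩
    exacts [he.2 rfl, hhalt i j s hmove hs]
  · exact h.of_ne_top (by lia) (block_mem_generators hp (by lia) (by lia))
      (.inr ((block_injective hk).ne (by lia)))

theorem halted_block_succ (hk : k ≠ 0) {G : Set (List ℕ)} (hex : e < x)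
    (hG : StateIn (ballots p k e) (G, block k (e - 1)))
    (hhalt : Halted Shift (G, block k (e - 1))) :
    Halted Shift (layers (ballots p k) (Set.Ico (minPos p k) e) ∪ List.cons e '' G,
      block (k + 1) (x - 1)) := by
  intro i j d hmove hd
  rcases shift_cons_iff.1 hmove with ⟨-, rfl⟩ | ⟨s, rfl, htail⟩
  · rcases cons_mem_layers_union_image.1 hd with ⟨hj, hmem⟩ | ⟨rfl, hmem⟩
    · have := lt_of_block_mem_ballots hk hmem
      have := hj.2
      lia
    · have := lt_of_block_mem_ballots hk (hG.1 hmem)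
      obtain rfl : x = j + 1 := by lia
      exact hG.2.2 hmem
  · rcases cons_mem_layers_union_image.1 hd with ⟨hx, -⟩ | ⟨hx, hmem⟩
    · have := hx.2
      lia
    · obtain rfl : x = e + 1 := by lia
      exact hhalt _ _ s htail hmem

theorem GreedyOutcome.of_notMem_generators_succ (h : GreedyOutcome p k) (hp : 1 ≤ p) (hk : k ≠ 0)
    {c : List ℕ} (hc : c ∈ ballots p (k + 1) x) (hgen : c ∉ generators p (k + 1) x) :
    ∃ F, F.Nonempty ∧ GreedyRun Shift (ballots p (k + 1) x \ {c}, c) (F, block (k + 1) (x - 1)) ∧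
      Halted Shift (F, block (k + 1) (x - 1)) := by
  obtain ⟨e, ⟨he, hex⟩, r, hr, rfl⟩ := hc
  obtain ⟨G, hrun, hhalt, hG⟩ := h.exists_run_tail hp he hex hr hgen
  have hG_in := hrun.stateIn (stateIn_diff_singleton hr)
  have hlayer := run_layer (F := ballots p (k + 1) x) (layers_mono (Set.subset_univ _))
    (layers_mono (Set.singleton_subset_iff.2 ⟨he, hex⟩)) hr hrun
  rw [ballots, layers_sdiff] at hlayer
  refine ⟨_, ?_, hlayer.trans (h.climb hp hk he hex hG_in hhalt),
    halted_block_succ hk hex hG_in hhalt⟩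
  rcases hG with hlt | hG
  · have hblock : block k (minPos p k - 1) ∈ ballots p k (minPos p k) :=
      block_mem_ballots hp (by lia) (by lia)
    exact ⟨_, .inl (cons_mem_layers.2 ⟨⟨le_rfl, hlt⟩, hblock⟩)⟩
  · exact (hG.image _).inr

end Layers

section Generators

variable {p k x : ℕ} {c : List ℕ}

theorem exhausts_zero : Exhausts p 0 x [] [] := by
  rw [Exhausts, ballots, Set.sdiff_self]
  exact .refl

theorem mem_generators_one (hc : c ∈ ballots p 1 x) : c ∈ generators p 1 x := by
  obtain ⟨e, ⟨he, hex⟩, _, rfl, rfl⟩ := hc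
  refine cons_mem_generators_succ.2 ?_
  exact he.eq_or_lt.imp (fun heq => ⟨heq.symm, Finset.mem_singleton_self _⟩) fun hlt =>
    ⟨hlt, hex, rfl⟩

theorem greedyOutcome (hp : 1 ≤ p) (k : ℕ) : GreedyOutcome p k := by
  induction k with
  | zero =>
    refine ⟨?_, fun _ _ => exhausts_zero, fun h => absurd h Nat.not_odd_zero, ?_⟩
    · rintro x c - hc -
      rw [Finset.mem_singleton.1 hc]
      exact exhausts_zero
    · rintro x c hc hgen
      exact absurd (Finset.mem_singleton.2 hc) hgen
  | succ k ih =>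
    refine ⟨fun hx hc hne => ih.of_ne_top_succ hp hx hc (hne.resolve_left k.succ_ne_zero),
      fun hk hx => ih.of_even_succ hp (Nat.not_even_iff_odd.1 (Nat.even_add_one.1 hk)) hx,
      fun hk hx => ih.of_odd_succ hp (Nat.not_odd_iff_even.1 (Nat.odd_add_one.1 hk)) hx, ?_⟩
    intro x c hc hgen
    have hk : k ≠ 0 := by
      rintro rfl
      exact hgen (mem_generators_one hc)
    exact ih.of_notMem_generators_succ hp hk hc hgen

theorem exhausts_block_of_even (hp : 1 ≤ p) (hk : Even k) :
    Exhausts p (k + 1) (minPos p k + 1) (block (k + 1) (minPos p k))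
      (minPos p k :: gapBlock p k) := by
  have hlayer : Set.Ico (minPos p k) (minPos p k + 1) = {minPos p k} := by grind
  have hsweep := ((greedyOutcome hp k).of_even hk (x := minPos p k) (by lia)).sweep
    (layers_mono (Set.subset_univ _)) subset_rfl (block_mem_ballots hp (by lia) (by lia))
  rwa [Set.sdiff_self, ← hlayer] at hsweep

theorem exists_exhausts_of_mem_generators (hp : 1 ≤ p) (hx : (p + 1) * k ≤ x)
    (hc : c ∈ generators p k x) : ∃ c', Exhausts p k x c c' := by
  have houtcome := greedyOutcome hp k
  by_cases htop : k = 0 ∨ c ≠ block k (x - 1)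
  · exact ⟨_, houtcome.of_ne_top hx hc htop⟩
  obtain ⟨hk, rfl⟩ : k ≠ 0 ∧ c = block k (x - 1) := by tauto
  rcases k.even_or_odd with heven | hodd
  · exact ⟨_, houtcome.of_even heven hx⟩
  rcases hx.eq_or_lt with rfl | hlt
  · obtain ⟨j, rfl⟩ := Nat.exists_eq_succ_of_ne_zero hk
    have hj : Even j := Nat.not_odd_iff_even.1 (Nat.odd_add_one.1 hodd)
    exact ⟨_, exhausts_block_of_even hp hj⟩
  · exact ⟨_, houtcome.of_odd hodd hlt⟩

end Generators

/-- The word of length `n` whose ones are at the positions listed in `c`. -/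
def toWord (n : ℕ) (c : List ℕ) : List Bool :=
  (List.range n).map fun t => decide (t ∈ c)

section Words

variable {n p k i j : ℕ} {c d a r : List ℕ}

theorem length_toWord : (toWord n c).length = n := by
  simp [toWord]

theorem getD_toWord (t : ℕ) : (toWord n c).getD t false = decide (t < n ∧ t ∈ c) := by
  rcases lt_or_ge t n with h | h <;> simp [toWord, h]

theorem toWord_eq_toWord_iff : toWord n c = toWord n d ↔ ∀ t < n, (t ∈ c ↔ t ∈ d) := by
  simp [toWord]

theorem applyT_toWord : applyT (toWord n c) i j = toWord n (j :: c.filter (· ≠ i)) := by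
  refine List.ext_getElem (by simp [applyT, toWord]) fun t _ _ => ?_
  simp only [applyT, toWord, List.getElem_set, List.getElem_map, List.getElem_range]
  grind

theorem wordMove_toWord_iff (hcn : ∀ t ∈ c, t < n) :
    WordMove (toWord n c) i j (toWord n d) ↔
      j < n ∧ i ∈ c ∧ j ∉ c ∧ (∀ t, min i j < t → t < max i j → t ∉ c) ∧
        ∀ t < n, t ∈ d ↔ t = j ∨ (t ∈ c ∧ t ≠ i) := by
  have hc : ∀ t, t ∈ c ↔ t < n ∧ t ∈ c := fun t => ⟨fun h => ⟨hcn t h, h⟩, And.right⟩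
  simp only [WordMove, okT, applyT_toWord, toWord_eq_toWord_iff, length_toWord, getD_toWord,
    decide_eq_true_eq, decide_eq_false_iff_not, ← hc, List.mem_cons, List.mem_filter]
  grind

theorem pairwise_gt_append_cons :
    (a ++ i :: r).Pairwise (· > ·) ↔
      a.Pairwise (· > ·) ∧ r.Pairwise (· > ·) ∧ (∀ t ∈ a, ∀ s ∈ r, s < t) ∧
        (∀ t ∈ a, i < t) ∧ ∀ s ∈ r, s < i := by
  simp only [List.pairwise_append, List.pairwise_cons, List.mem_cons]
  grind

theorem shift_iff_wordMove (hc : c.Pairwise (· > ·)) (hd : d.Pairwise (· > ·))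
    (hcn : ∀ t ∈ c, t < n) (hdn : ∀ t ∈ d, t < n) (hcd : c ≠ d) :
    Shift c i j d ↔ WordMove (toWord n c) i j (toWord n d) := by
  rw [wordMove_toWord_iff hcn]
  constructor
  · rintro ⟨a, r, rfl, rfl⟩
    have hij : i ≠ j := fun h => hcd (h ▸ rfl)
    obtain ⟨-, -, -, hai, hri⟩ := pairwise_gt_append_cons.1 hc
    obtain ⟨-, -, -, haj, hrj⟩ := pairwise_gt_append_cons.1 hd
    simp only [List.mem_append, List.mem_cons] at *
    refine ⟨hdn j (by simp), by simp, ?_, ?_, ?_⟩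
    · grind
    · grind
    · grind
  · rintro ⟨hjn, hi, hj, hbetween, hmem⟩
    obtain ⟨a, r, rfl⟩ := List.append_of_mem hi
    obtain ⟨ha, hr, har, hai, hri⟩ := pairwise_gt_append_cons.1 hc
    have hsorted : (a ++ j :: r).Pairwise (· > ·) := by
      refine pairwise_gt_append_cons.2 ⟨ha, hr, har, fun t ht => ?_, fun t ht => ?_⟩
      · grind
      · grind
    refine ⟨a, r, rfl, hd.eq_of_mem_iff hsorted fun t => ?_⟩
    simp only [List.mem_append, List.mem_cons] at hcn hmem ⊢
    rcases lt_or_ge t n with ht | ht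
    · rw [hmem t ht]
      grind
    · have htd : t ∉ d := fun h => ht.not_gt (hdn t h)
      grind

theorem injOn_toWord : (ballots p k n).InjOn (toWord n) := by
  intro c hc d hd h
  refine (pairwise_gt_of_mem_ballots hc).eq_of_mem_iff (pairwise_gt_of_mem_ballots hd) fun t => ?_
  rcases lt_or_ge t n with ht | ht
  · exact toWord_eq_toWord_iff.1 h t ht
  · exact iff_of_false (fun h => ht.not_gt (lt_of_mem_of_mem_ballots hc h))
      fun h => ht.not_gt (lt_of_mem_of_mem_ballots hd h)

theorem toWord_succ : toWord (n + 1) c = toWord n c ++ [decide (n ∈ c)] := by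
  simp [toWord, List.range_succ]

theorem toWord_cons_self : toWord n (n :: c) = toWord n c :=
  toWord_eq_toWord_iff.2 fun t ht => by simp [ht.ne]

theorem memC_iff_isPrefix {w : List Bool} :
    memC n p k w ↔ w.length = n ∧ w.count true = k ∧
      ∀ u, u <+: w → p * u.count true ≤ u.count false := by
  refine and_congr_right fun _ => and_congr_right fun _ => ⟨?_, ?_⟩
  · rintro h u ⟨v, rfl⟩
    exact h u v rfl
  · rintro h u v rfl
    exact h u (List.prefix_append u v)

theorem memC_concat_false {u : List Bool} : memC (n + 1) p k (u ++ [false]) ↔ memC n p k u := by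
  have hones : (u ++ [false]).count true = u.count true := by simp
  have hzeros : (u ++ [false]).count false = u.count false + 1 := by simp
  simp only [memC_iff_isPrefix, List.prefix_concat_iff, forall_eq_or_imp, List.length_append,
    List.length_singleton, Nat.add_right_cancel_iff, hones, hzeros]
  refine and_congr_right fun _ => and_congr_right fun _ => and_iff_right_of_imp fun h => ?_
  exact (h u List.prefix_rfl).trans (Nat.le_succ _)

theorem memC_concat_true {u : List Bool} :
    memC (n + 1) p (k + 1) (u ++ [true]) ↔ minPos p k ≤ n ∧ memC n p k u := by
  have hones : (u ++ [true]).count true = u.count true + 1 := by simp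
  have hzeros : (u ++ [true]).count false = u.count false := by simp
  have hlen := List.count_true_add_count_false u
  simp only [memC_iff_isPrefix, List.prefix_concat_iff, forall_eq_or_imp, List.length_append,
    List.length_singleton, Nat.add_right_cancel_iff, hones, hzeros]
  grind

theorem mem_ballots_succ_and_notMem :
    c ∈ ballots p k (n + 1) ∧ n ∉ c ↔ c ∈ ballots p k n := by
  refine ⟨?_, fun h =>
    ⟨ballots_mono n.le_succ h, fun hn => (lt_of_mem_of_mem_ballots h hn).false⟩⟩
  rintro ⟨hc, hn⟩
  cases k with
  | zero => exact hc
  | succ k =>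
    obtain ⟨y, ⟨hy, hyn⟩, s, hs, rfl⟩ := hc
    have hne : n ≠ y := fun h => hn (h ▸ List.mem_cons_self)
    exact cons_mem_ballots_succ.2 ⟨⟨hy, by omega⟩, hs⟩

theorem mem_ballots_succ_and_mem :
    c ∈ ballots p (k + 1) (n + 1) ∧ n ∈ c ↔ minPos p k ≤ n ∧ ∃ s ∈ ballots p k n, n :: s = c := by
  constructor
  · rintro ⟨⟨y, ⟨hy, hyn⟩, s, hs, rfl⟩, hn⟩
    obtain rfl : n = y := (List.mem_cons.1 hn).elim id fun h => by
      have := lt_of_mem_of_mem_ballots hs h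
      omega
    exact ⟨hy, s, hs, rfl⟩
  · rintro ⟨hn, s, hs, rfl⟩
    exact ⟨cons_mem_ballots_succ.2 ⟨⟨hn, n.lt_succ_self⟩, hs⟩, List.mem_cons_self⟩

theorem memC_iff_exists_mem_ballots {w : List Bool} :
    memC n p k w ↔ ∃ c ∈ ballots p k n, toWord n c = w := by
  induction n generalizing k w with
  | zero =>
    cases k with
    | zero => simpa [memC, ballots, toWord, eq_comm] using by rintro rfl; simp
    | succ k => simpa [memC, ballots] using by rintro rfl; simp
  | succ n ih =>
    rcases w.eq_nil_or_concat' with rfl | ⟨u, b, rfl⟩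
    · simp [memC, toWord]
    have hconcat : ∀ c, toWord (n + 1) c = u ++ [b] ↔ decide (n ∈ c) = b ∧ toWord n c = u :=
      fun c => by rw [toWord_succ, List.append_singleton_inj, and_comm]
    simp only [hconcat, ← and_assoc]
    cases b with
    | false =>
      simp only [decide_eq_false_iff_not, mem_ballots_succ_and_notMem]
      rw [memC_concat_false, ih]
    | true =>
      cases k with
      | zero => simp [memC, ballots]
      | succ k =>
        simp only [decide_eq_true_eq, mem_ballots_succ_and_mem]
        rw [memC_concat_true, ih]
        simp [and_assoc, toWord_cons_self]

end Words

section Counting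

variable {p n k x : ℕ} {c : List ℕ}

theorem shift_iff_wordMove_toWord : ∀ c ∈ ballots p k n, ∀ d ∈ ballots p k n, c ≠ d →
    ∀ i j, Shift c i j d ↔ WordMove (toWord n c) i j (toWord n d) :=
  fun _ hc _ hd hcd _ _ =>
    shift_iff_wordMove (pairwise_gt_of_mem_ballots hc) (pairwise_gt_of_mem_ballots hd)
      (fun _ => lt_of_mem_of_mem_ballots hc) (fun _ => lt_of_mem_of_mem_ballots hd) hcd

theorem image_toWord_ballots_sdiff (hc : c ∈ ballots p k n) :
    toWord n '' (ballots p k n \ {c}) = {w | memC n p k w} \ {toWord n c} := by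
  have himage : toWord n '' ballots p k n = {w | memC n p k w} :=
    Set.ext fun _ => memC_iff_exists_mem_ballots.symm
  rw [injOn_toWord.image_sdiff_subset (Set.singleton_subset_iff.2 hc), himage, Set.image_singleton]

theorem greedyRun_wordMove_of_shift {F : Set (List ℕ)} {c' : List ℕ} (hc : c ∈ ballots p k n)
    (h : GreedyRun Shift (ballots p k n \ {c}, c) (F, c')) :
    GreedyRun WordMove ({w | memC n p k w} \ {toWord n c}, toWord n c)
      (toWord n '' F, toWord n c') := by
  rw [← image_toWord_ballots_sdiff hc]
  exact GreedyRun.map injOn_toWord shift_iff_wordMove_toWord h (stateIn_diff_singleton hc)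

theorem isGen_toWord_iff (hp : 1 ≤ p) (hn : (p + 1) * k ≤ n) (hc : c ∈ ballots p k n) :
    IsGen (memC n p k) (toWord n c) ↔ c ∈ generators p k n := by
  rw [isGen_iff_greedyRun, and_iff_right (memC_iff_exists_mem_ballots.2 ⟨c, hc, rfl⟩)]
  constructor
  · rintro ⟨w, hrun⟩
    by_contra hgen
    obtain ⟨F, hF, hshift, hhalted⟩ := (greedyOutcome hp k).of_notMem_generators hc hgen
    have hhalted' : Halted WordMove (toWord n '' F, toWord n (block k (n - 1))) :=
      hhalted.map shift_iff_wordMove_toWord (GreedyRun.stateIn hshift (stateIn_diff_singleton hc))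
    have heq := GreedyRun.eq_of_halted (fun _ _ _ _ _ h h' => h.2.trans h'.2.symm) hrun
      (greedyRun_wordMove_of_shift hc hshift) (halted_empty w) hhalted'
    exact (hF.image (toWord n)).ne_empty (congrArg Prod.fst heq).symm
  · intro hgen
    obtain ⟨c', hex⟩ := exists_exhausts_of_mem_generators hp hn hgen
    exact ⟨toWord n c', by simpa using greedyRun_wordMove_of_shift hc hex⟩

theorem setOf_isGen_memC (hp : 1 ≤ p) (hn : (p + 1) * k ≤ n) :
    {w | IsGen (memC n p k) w} = toWord n '' (generators p k n : Set (List ℕ)) := by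
  ext w
  constructor
  · intro hw
    obtain ⟨c, hc, rfl⟩ := memC_iff_exists_mem_ballots.1 hw.1
    exact ⟨c, (isGen_toWord_iff hp hn hc).1 hw, rfl⟩
  · rintro ⟨c, hc, rfl⟩
    exact (isGen_toWord_iff hp hn (generators_subset_ballots hp hn hc)).2 hc

theorem card_generators_succ :
    (generators p (k + 1) x).card =
      (generators p k (minPos p k)).card + (x - minPos p k - 1) := by
  have hdisjoint : Disjoint ((generators p k (minPos p k)).image (List.cons (minPos p k)))
      ((Finset.Ioo (minPos p k) x).image (block (k + 1))) := by
    simp only [Finset.disjoint_left, Finset.mem_image, Finset.mem_Ioo, not_exists, not_and]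
    rintro _ ⟨s, -, rfl⟩ e ⟨he, -⟩ heq
    exact he.ne (List.cons.inj heq).1.symm
  rw [generators, Finset.card_union_of_disjoint hdisjoint,
    Finset.card_image_of_injective _ List.cons_injective,
    Finset.card_image_of_injective _ (block_injective k.succ_ne_zero), Nat.card_Ioo]

theorem card_generators_minPos : (generators p k (minPos p k)).card = p * k + 1 := by
  induction k with
  | zero => rfl
  | succ k ih =>
    rw [card_generators_succ, ih]
    lia

end Counting

theorem card_gen_p (n p k : ℕ) (hp : 1 ≤ p) (hk : 1 ≤ k) (hn : (p + 1) * k ≤ n) :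
    Nat.card {α : List Bool | IsGen (memC n p k) α} = n + 1 - k - p := by
  have hinj : (generators p k n : Set (List ℕ)).InjOn (toWord n) :=
    injOn_toWord.mono fun _ hc => generators_subset_ballots hp hn hc
  obtain ⟨j, rfl⟩ := Nat.exists_eq_add_of_le' hk
  calc Nat.card {α : List Bool | IsGen (memC n p (j + 1)) α}
      = (generators p (j + 1) n).card := by
        rw [setOf_isGen_memC hp hn, Nat.card_image_of_injOn hinj, Nat.card_coe_set_eq,
          Set.ncard_coe_finset]
    _ = (p * j + 1) + (n - minPos p j - 1) := by
        rw [card_generators_succ, card_generators_minPos]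
    _ = n + 1 - (j + 1) - p := by lia
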